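/- Fix an integer k ≥ 416. Let G be a finite simple graph, L a 10-assignment for G, and α, β two L-colorings of G. Suppose G contains five distinct vertices a, b, c, d, e with ab, bc, cd, de, bd edges of G, d_G(a) = d_G(c) = d_G(e) = 5, and d_G(b) = d_G(d) = 6. Let S = {a, b, c, d, e}. If there exists a k-good recoloring sequence in G − S from the restriction of α to G − S to the restriction of β to G − S, then there exists a k-good recoloring sequence in G from α to β. -/

import Mathlib

def IsLColoring {V : Type} (G : SimpleGraph V) (L : V → Finset ℕ) (φ : V → ℕ) : Prop :=
  (∀ v, φ v ∈ L v) ∧ ∀ ⦃u w : V⦄, G.Adj u w → φ u ≠ φ w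

def recolorCount {V : Type} {m : ℕ} (φ : Fin (m + 1) → V → ℕ) (v : V) : ℕ :=
  (Finset.univ.filter fun i : Fin m => φ i.castSucc v ≠ φ i.succ v).card

def IsRecolSeq {V : Type} (G : SimpleGraph V) (L : V → Finset ℕ) {m : ℕ}
    (φ : Fin (m + 1) → V → ℕ) (α β : V → ℕ) : Prop :=
  φ 0 = α ∧ φ (Fin.last m) = β ∧ (∀ i, IsLColoring G L (φ i)) ∧
    ∀ i : Fin m, ∃! v : V, φ i.castSucc v ≠ φ i.succ v

/-!
Follow the given sequence of `G − S`, letting every vertex of `S` leave its color just before an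
outside neighbor takes it, and reset the vertices of `S` one by one at the end. If `v` has `d`
neighbors outside `S`, it sees at most `d * k` recolorings there. With `r = 9 - d_G(v)`, at least
`r` colors of `L v` differ from the color of `v` and from those of its neighbors, so `v` can leave
for a color that avoids the next `r - 1` of these recolorings. It is then recolored about
`d * k / r` times, which is `k` for `a`, `e`, `b`, `d` but only `3 * k / 4` for `c`.

The small excess over `k` at the first four vertices is shifted to `c`: if `v` ignores the color of
one neighbor `u`, it avoids one more recoloring, and `u` may have to be recolored first. So `a` and
`e` sometimes ignore `b` and `d`, and these in turn sometimes ignore `c`.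
-/

section Paths

variable {V : Type} [DecidableEq V] {G : SimpleGraph V} {L : V → Finset ℕ}

/-- `RecolorPath G L φ ψ l`: carrying out the moves `l` one after the other, where `(v, x)` gives
`v` the new color `x`, turns `φ` into `ψ` through `L`-colorings of `G`. This is a recoloring
sequence recorded by its moves rather than by its colorings. -/
inductive RecolorPath (G : SimpleGraph V) (L : V → Finset ℕ) :
    (V → ℕ) → (V → ℕ) → List (V × ℕ) → Prop
  | nil {φ : V → ℕ} (hφ : IsLColoring G L φ) : RecolorPath G L φ φ []
  | cons {φ ψ : V → ℕ} {v : V} {x : ℕ} {l : List (V × ℕ)} (hφ : IsLColoring G L φ)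
      (hx : x ≠ φ v) (h : RecolorPath G L (Function.update φ v x) ψ l) :
      RecolorPath G L φ ψ ((v, x) :: l)

/-- The number of moves of the list `l` that recolor `v`. -/
def moveCount (l : List (V × ℕ)) (v : V) : ℕ :=
  (l.map Prod.fst).count v

@[simp] lemma moveCount_nil (v : V) : moveCount [] v = 0 := rfl

@[simp] lemma moveCount_cons_self (v : V) (x : ℕ) (l : List (V × ℕ)) :
    moveCount ((v, x) :: l) v = moveCount l v + 1 := by
  simp [moveCount]

@[simp] lemma moveCount_cons_of_ne {u v : V} (h : u ≠ v) (x : ℕ) (l : List (V × ℕ)) :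
    moveCount ((v, x) :: l) u = moveCount l u := by
  simp [moveCount, List.count_cons_of_ne h.symm]

@[simp] lemma moveCount_append (l l' : List (V × ℕ)) (v : V) :
    moveCount (l ++ l') v = moveCount l v + moveCount l' v := by
  simp [moveCount]

lemma moveCount_le_of_sublist {l l' : List (V × ℕ)} (h : l.Sublist l') (v : V) :
    moveCount l v ≤ moveCount l' v :=
  (h.map Prod.fst).count_le v

lemma IsLColoring.update {φ : V → ℕ} (hφ : IsLColoring G L φ) {v : V} {x : ℕ} (hx : x ∈ L v)
    (hv : ∀ u, G.Adj v u → φ u ≠ x) : IsLColoring G L (Function.update φ v x) := by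
  refine ⟨fun u => ?_, fun u w huw => ?_⟩
  · obtain rfl | hu := eq_or_ne u v
    · simpa using hx
    · simpa [hu] using hφ.1 u
  · obtain rfl | hu := eq_or_ne u v
    · simpa [huw.ne'] using (hv w huw).symm
    · obtain rfl | hw := eq_or_ne w v
      · simpa [hu] using hv u huw.symm
      · simpa [hu, hw] using hφ.2 huw

namespace RecolorPath

lemma left {φ ψ : V → ℕ} {l : List (V × ℕ)} (h : RecolorPath G L φ ψ l) : IsLColoring G L φ := by
  cases h <;> assumption

lemma right {φ ψ : V → ℕ} {l : List (V × ℕ)} (h : RecolorPath G L φ ψ l) :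
    IsLColoring G L ψ := by
  induction h <;> assumption

lemma append {φ ψ χ : V → ℕ} {l l' : List (V × ℕ)} (h : RecolorPath G L φ ψ l)
    (h' : RecolorPath G L ψ χ l') : RecolorPath G L φ χ (l ++ l') := by
  induction h with
  | nil _ => exact h'
  | cons hφ hx _ ih => exact cons hφ hx (ih h')

lemma single {φ : V → ℕ} (hφ : IsLColoring G L φ) {v : V} {x : ℕ} (hx : x ∈ L v) (hxv : x ≠ φ v)
    (hv : ∀ u, G.Adj v u → φ u ≠ x) : RecolorPath G L φ (Function.update φ v x) [(v, x)] :=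
  cons hφ hxv (nil (hφ.update hx hv))

lemma eq_of_moveCount_eq_zero {φ ψ : V → ℕ} {l : List (V × ℕ)} (h : RecolorPath G L φ ψ l) {u : V}
    (hu : moveCount l u = 0) : ψ u = φ u := by
  induction h with
  | nil _ => rfl
  | @cons φ ψ v x l _ _ _ ih =>
    obtain rfl | huv := eq_or_ne u v
    · simp at hu
    · rw [moveCount_cons_of_ne huv] at hu
      rw [ih hu, Function.update_of_ne huv]

lemma exists_isRecolSeq {φ ψ : V → ℕ} {l : List (V × ℕ)} (h : RecolorPath G L φ ψ l) :
    ∃ (m : ℕ) (s : Fin (m + 1) → V → ℕ),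
      IsRecolSeq G L s φ ψ ∧ ∀ v, recolorCount s v = moveCount l v := by
  induction h with
  | @nil φ hφ => exact ⟨0, fun _ => φ, ⟨rfl, rfl, fun _ => hφ, fun i => i.elim0⟩, fun _ => rfl⟩
  | @cons φ ψ v x l hφ hx _ ih =>
    obtain ⟨m, s, ⟨hfirst, hlast, hcol, hstep⟩, hcount⟩ := ih
    refine ⟨m + 1, Fin.cons φ s, ⟨rfl, ?_, ?_, ?_⟩, fun u => ?_⟩
    · rw [← Fin.succ_last, Fin.cons_succ, hlast]
    · exact Fin.cases hφ hcol
    · refine Fin.cases ⟨v, by simpa [hfirst] using hx.symm, fun u hu => ?_⟩ fun i => ?_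
      · by_contra huv
        simp [hfirst, huv] at hu
      · simpa [← Fin.succ_castSucc] using hstep i
    · rw [recolorCount, Fin.card_filter_univ_succ]
      simp only [Fin.castSucc_zero, Fin.cons_zero, Fin.cons_succ, hfirst, ← Fin.succ_castSucc]
      rw [← recolorCount, hcount u]
      obtain rfl | huv := eq_or_ne u v
      · simp [hx.symm]
      · simp [huv]

end RecolorPath

lemma exists_recolorPath_update {φ : V → ℕ} (hφ : IsLColoring G L φ) {v : V} {x : ℕ}
    (hx : x ∈ L v) (hv : ∀ u, G.Adj v u → φ u ≠ x) :
    ∃ l, RecolorPath G L φ (Function.update φ v x) l ∧ moveCount l v ≤ 1 ∧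
      ∀ u ≠ v, moveCount l u = 0 := by
  obtain rfl | hne := eq_or_ne x (φ v)
  · exact ⟨[], by simpa using RecolorPath.nil hφ, by simp, by simp⟩
  · exact ⟨[(v, x)], .single hφ hx hne hv, by simp, fun u hu => by simp [hu]⟩

lemma IsRecolSeq.exists_recolorPath {m : ℕ} {s : Fin (m + 1) → V → ℕ} {α β : V → ℕ}
    (hs : IsRecolSeq G L s α β) :
    ∃ l, RecolorPath G L α β l ∧ ∀ v, moveCount l v = recolorCount s v := by
  induction m generalizing α with
  | zero =>
    obtain ⟨rfl, rfl, hcol, -⟩ := hs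
    exact ⟨[], .nil (hcol 0), fun _ => rfl⟩
  | succ m ih =>
    obtain ⟨rfl, hlast, hcol, hstep⟩ := hs
    obtain ⟨v, hv, hunique⟩ := hstep 0
    have hupdate : s 1 = Function.update (s 0) v (s 1 v) := by
      refine Function.eq_update_iff.2 ⟨rfl, fun u hu => ?_⟩
      by_contra hne
      exact hu (hunique u (Ne.symm hne))
    obtain ⟨l, hl, hcount⟩ := ih (s := fun i => s i.succ) (α := s 1)
      ⟨rfl, hlast, fun i => hcol _, fun i => hstep i.succ⟩
    refine ⟨(v, s 1 v) :: l, .cons (hcol 0) (Ne.symm hv) (hupdate ▸ hl), fun u => ?_⟩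
    rw [recolorCount, Fin.card_filter_univ_succ]
    have htail := hcount u
    rw [recolorCount] at htail
    obtain rfl | huv := eq_or_ne u v
    · rw [moveCount_cons_self, htail, if_pos hv]
      rfl
    · rw [moveCount_cons_of_ne huv, htail, if_neg fun h => huv (hunique u h)]
      rfl

end Paths

section Colors

variable {V : Type} {G : SimpleGraph V} {L : V → Finset ℕ} {v : V} [Fintype (G.neighborSet v)]

lemma exists_color_of_card_lt (φ : V → ℕ) {I : Finset V} (F : Finset ℕ)
    (hI : I ⊆ G.neighborFinset v) (hcard : G.degree v + 1 + F.card < (L v).card + I.card) :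
    ∃ x ∈ L v, x ≠ φ v ∧ x ∉ F ∧ ∀ u, G.Adj v u → u ∉ I → φ u ≠ x := by
  classical
  let forbidden := insert (φ v) ((G.neighborFinset v \ I).image φ ∪ F)
  have hforbidden : forbidden.card < (L v).card := by
    have hinsert : forbidden.card ≤ _ := Finset.card_insert_le _ _
    have hunion := Finset.card_union_le ((G.neighborFinset v \ I).image φ) F
    have himage := Finset.card_image_le (s := G.neighborFinset v \ I) (f := φ)
    have hsdiff := Finset.card_sdiff_add_card_eq_card hI
    rw [G.card_neighborFinset_eq_degree v] at hsdiff
    omega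
  obtain ⟨x, hxL, hx⟩ := Finset.exists_mem_notMem_of_card_lt_card hforbidden
  simp only [forbidden, Finset.mem_insert, Finset.mem_union, Finset.mem_image, Finset.mem_sdiff,
    SimpleGraph.mem_neighborFinset, not_or, not_exists, not_and] at hx
  exact ⟨x, hxL, hx.1, hx.2.2, fun u huv hu => hx.2.1 u ⟨huv, hu⟩⟩

end Colors

section Resetting

variable {V : Type} [DecidableEq V] {G : SimpleGraph V} [G.LocallyFinite] {L : V → Finset ℕ}

lemma exists_recolorPath_forall_ne {vs : List V}
    (hslack : ∀ v ∈ vs, G.degree v + 1 < (L v).card) {φ : V → ℕ} (hφ : IsLColoring G L φ) (x : ℕ) :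
    ∃ φ' l, RecolorPath G L φ φ' l ∧ (∀ u ∈ vs, φ' u ≠ x) ∧ (∀ u, moveCount l u ≤ 1) ∧
      ∀ u ∉ vs, moveCount l u = 0 := by
  induction vs with
  | nil => exact ⟨φ, [], .nil hφ, by simp, by simp, by simp⟩
  | cons v vs ih =>
    obtain ⟨φ', l, hpath, hne, hone, hzero⟩ := ih fun u hu => hslack u (List.mem_cons_of_mem v hu)
    by_cases hv : φ' v = x
    · have hvs : v ∉ vs := fun h => hne v h hv
      obtain ⟨z, hz, hzv, -, hadj⟩ := exists_color_of_card_lt φ' ∅ (Finset.empty_subset _)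
        (by simpa using hslack v List.mem_cons_self)
      refine ⟨_, _, hpath.append (.single hpath.right hz hzv fun u hu => hadj u hu (by simp)),
        fun u hu => ?_, fun u => ?_, fun u hu => ?_⟩
      all_goals obtain rfl | huv := eq_or_ne u v
      · simpa [← hv] using hzv
      · simpa [huv] using hne u (List.mem_of_ne_of_mem huv hu)
      · simp [hzero u hvs]
      · simpa [huv] using hone u
      · simp at hu
      · simpa [huv] using hzero u fun h => hu (List.mem_cons_of_mem v h)
    · refine ⟨φ', l, hpath, ?_, hone, fun u hu => hzero u fun h => hu (List.mem_cons_of_mem v h)⟩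
      exact List.forall_mem_cons.2 ⟨hv, hne⟩

lemma exists_recolorPath_of_eq_off {vs : List V} (hnodup : vs.Nodup)
    (hslack : ∀ v ∈ vs, G.degree v + 1 < (L v).card) {φ β : V → ℕ} (hφ : IsLColoring G L φ)
    (hβ : IsLColoring G L β) (heq : ∀ u ∉ vs, φ u = β u) :
    ∃ l, RecolorPath G L φ β l ∧ (∀ u ∉ vs, moveCount l u = 0) ∧
      ∀ v ∈ vs, moveCount l v ≤ vs.idxOf v + 1 := by
  induction vs generalizing φ with
  | nil =>
    obtain rfl : φ = β := funext fun u => heq u (by simp)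
    exact ⟨[], .nil hφ, by simp, by simp⟩
  | cons v vs ih =>
    obtain ⟨hv, hnodup⟩ := List.nodup_cons.1 hnodup
    have hslack' : ∀ u ∈ vs, G.degree u + 1 < (L u).card := fun u hu =>
      hslack u (List.mem_cons_of_mem v hu)
    obtain ⟨φ₁, l₁, hpath₁, hne, hone₁, hzero₁⟩ := exists_recolorPath_forall_ne hslack' hφ (β v)
    have hφ₁ : ∀ u ∉ v :: vs, φ₁ u = β u := fun u hu =>
      (hpath₁.eq_of_moveCount_eq_zero (hzero₁ u fun h => hu (List.mem_cons_of_mem v h))).trans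
        (heq u hu)
    have hfree : ∀ u, G.Adj v u → φ₁ u ≠ β v := fun u huv => by
      by_cases hu : u ∈ vs
      · exact hne u hu
      · rw [hφ₁ u (by simp [huv.ne', hu])]
        exact hβ.2 huv.symm
    obtain ⟨l₂, hpath₂, hone₂, hzero₂⟩ := exists_recolorPath_update hpath₁.right (hβ.1 v) hfree
    obtain ⟨l₃, hpath₃, hzero₃, hidx₃⟩ := ih hnodup hslack' hpath₂.right fun u hu => by
      obtain rfl | huv := eq_or_ne u v
      · simp
      · rw [Function.update_of_ne huv, hφ₁ u (by simp [huv, hu])]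
    refine ⟨_, (hpath₁.append hpath₂).append hpath₃, fun u hu => ?_, fun u hu => ?_⟩
    · obtain ⟨huv, hu⟩ := not_or.1 (List.mem_cons.not.1 hu)
      simp [hzero₁ u hu, hzero₂ u huv, hzero₃ u hu]
    · obtain rfl | huv := eq_or_ne u v
      · simpa [hzero₁ u hv, hzero₃ u hv] using hone₂
      · have hcount₁ := hone₁ u
        have hcount₃ := hidx₃ u (List.mem_of_ne_of_mem huv hu)
        simp only [moveCount_append, hzero₂ u huv, List.idxOf_cons_ne _ huv.symm]
        omega

end Resetting

section Guards

variable {α : Type*} {r q : ℕ} {x y : α} {l : List α}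

/-- The color `x` is safe from the first `σ` upcoming hits `l`, for some `σ ≤ r`, and `q` is at
least `l.length + r - σ`. The load `q` stays constant as long as the hits miss `x`, whereas the
number `σ` is allowed to exceed `l.length`. -/
def Guards (r : ℕ) (l : List α) (x : α) (q : ℕ) : Prop :=
  ∃ σ ≤ r, l.length + r ≤ q + σ ∧ x ∉ l.take σ

lemma guards_length_add (r : ℕ) (l : List α) (x : α) : Guards r l x (l.length + r) :=
  ⟨0, by simp⟩

lemma Guards.length_le (h : Guards r l x q) : l.length ≤ q := by
  obtain ⟨σ, hσ, hq, -⟩ := h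
  omega

lemma Guards.length_add_le (h : Guards r (x :: l) x q) : l.length + 1 + r ≤ q := by
  obtain ⟨σ | σ, -, hq, hx⟩ := h
  · simpa using hq
  · simp at hx

lemma Guards.of_cons (h : Guards r (y :: l) x q) : Guards r l x q := by
  obtain ⟨σ | σ, hσ, hq, hx⟩ := h
  · exact ⟨0, by simp, by rw [List.length_cons] at hq; omega, by simp⟩
  · rw [List.length_cons] at hq
    rw [List.take_succ_cons, List.mem_cons, not_or] at hx
    exact ⟨σ, by omega, by omega, hx.2⟩

end Guards

section Cost

/-- A bound for the number of future recolorings of a vertex with load `q`. The vertex is recolored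
at most `f` times for the benefit of others; among its remaining recolorings, `s` reduce the load
by `r + 1` and the others reduce it by `r`. A recoloring for the benefit of others increases the
load by at most `1`. -/
def cost (r f s q : ℕ) : ℕ :=
  f + s + (f + q - (r + 1) * s) / r

variable {r f s q q' : ℕ}

lemma cost_mono_right (hq : q ≤ q') : cost r f s q ≤ cost r f s q' := by
  unfold cost
  gcongr

lemma one_add_cost_le_cost_of_strong (hq : q' + (r + 1) ≤ q) :
    1 + cost r f s q' ≤ cost r f (s + 1) q := by
  have hdiv : (f + q' - (r + 1) * s) / r ≤ (f + q - (r + 1) * (s + 1)) / r := by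
    gcongr ?_ / r
    rw [Nat.mul_succ]
    omega
  unfold cost
  omega

lemma one_add_cost_le_cost_of_weak (hr : 0 < r) (hq : q' + r ≤ q) :
    1 + cost r f 0 q' ≤ cost r f 0 q := by
  have hdiv : (f + q') / r + 1 ≤ (f + q) / r := by
    rw [← Nat.add_div_right _ hr]
    gcongr ?_ / r
    omega
  simp only [cost, mul_zero, Nat.sub_zero]
  omega

lemma one_add_cost_le_cost_of_forced (hq : q' ≤ q + 1) :
    1 + cost r f s q' ≤ cost r (f + 1) s q := by
  have hdiv : (f + q' - (r + 1) * s) / r ≤ (f + 1 + q - (r + 1) * s) / r := by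
    gcongr ?_ / r
    omega
  unfold cost
  omega

end Cost

section GuardedColors

variable {V : Type} {G : SimpleGraph V} {L : V → Finset ℕ} {v : V} [Fintype (G.neighborSet v)]
  {r : ℕ}

lemma exists_color_guards (hslack : G.degree v + 1 + r ≤ (L v).card) (hr : 0 < r) (φ : V → ℕ)
    (l : List ℕ) :
    ∃ x ∈ L v, x ≠ φ v ∧ (∀ u, G.Adj v u → φ u ≠ x) ∧ Guards r l x (l.length + 1) := by
  have hcard := (l.take (r - 1)).toFinset_card_le
  rw [List.length_take] at hcard
  obtain ⟨x, hx, hxv, hxl, hadj⟩ := exists_color_of_card_lt (L := L) φ (l.take (r - 1)).toFinset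
    (Finset.empty_subset (G.neighborFinset v)) (by rw [Finset.card_empty]; omega)
  exact ⟨x, hx, hxv, fun u hu => hadj u hu (Finset.notMem_empty u),
    r - 1, by omega, by omega, by simpa using hxl⟩

lemma exists_color_guards_of_ignore (hslack : G.degree v + 1 + r ≤ (L v).card) {u : V}
    (hvu : G.Adj v u) (φ : V → ℕ) (l : List ℕ) :
    ∃ x ∈ L v, x ≠ φ v ∧ (∀ w, G.Adj v w → w ≠ u → φ w ≠ x) ∧ Guards r l x l.length := by
  have hcard := (l.take r).toFinset_card_le
  rw [List.length_take] at hcard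
  obtain ⟨x, hx, hxv, hxl, hadj⟩ := exists_color_of_card_lt (L := L) (I := {u}) φ
    (l.take r).toFinset (by simpa using hvu) (by rw [Finset.card_singleton]; omega)
  exact ⟨x, hx, hxv, fun w hw hwu => hadj w hw (Finset.notMem_singleton.2 hwu),
    r, le_rfl, le_rfl, by simpa using hxl⟩

lemma exists_recolorPath_ne [DecidableEq V] (hslack : G.degree v + 1 + r ≤ (L v).card)
    (hr : 0 < r) {φ : V → ℕ} (hφ : IsLColoring G L φ) {l : List ℕ} {q : ℕ}
    (hguard : Guards r l (φ v) q) (x : ℕ) :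
    ∃ φ' q' l', RecolorPath G L φ φ' l' ∧ φ' v ≠ x ∧ (∀ u ≠ v, moveCount l' u = 0) ∧
      Guards r l (φ' v) q' ∧ ∀ f s, moveCount l' v + cost r f s q' ≤ cost r (f + 1) s q := by
  by_cases hx : φ v = x
  · obtain ⟨z, hz, hzv, hadj, hzl⟩ := exists_color_guards hslack hr φ l
    refine ⟨_, l.length + 1, _, .single hφ hz hzv hadj, ?_, fun u hu => by simp [hu], ?_, ?_⟩
    · simpa [← hx] using hzv
    · simpa using hzl
    · intro f s
      simpa using one_add_cost_le_cost_of_forced (Nat.add_le_add_right hguard.length_le 1)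
  · refine ⟨φ, q, [], .nil hφ, hx, fun _ _ => rfl, hguard, fun f s => ?_⟩
    exact (Nat.add_le_add_right (Nat.zero_le 1) _).trans
      (one_add_cost_le_cost_of_forced (Nat.le_succ q))

end GuardedColors

section Ledgers

/-- The bookkeeping of a partial recoloring: the current coloring, the load of every vertex (see
`Guards`), and a multiset of loans. A loan `(v, u)` allows `v` to choose one new color without
regard to its neighbor `u`, at the price of recoloring `u` first if it has that color. -/
structure Ledger (V : Type) where
  color : V → ℕ
  load : V → ℕ
  loans : Multiset (V × V)

namespace Ledger

variable {V : Type} {G : SimpleGraph V} {L : V → Finset ℕ} {r : V → ℕ} {vs : List V}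
  {H : V → List ℕ} {A B C : Ledger V} {v : V}

/-- The ledger `A` is a valid state of the recoloring of the vertices `vs`, when `H v` lists the
colors that the neighbors of `v ∈ vs` outside `vs` have yet to receive. In every loan `(v, u)` the
borrower `v` precedes the lender `u` in `vs`. -/
structure IsSafe (G : SimpleGraph V) (L : V → Finset ℕ) (r : V → ℕ) (vs : List V)
    (H : V → List ℕ) (A : Ledger V) : Prop where
  isLColoring : IsLColoring G L A.color
  adj : ∀ t ∈ A.loans, G.Adj t.1 t.2
  mem : ∀ t ∈ A.loans, t.2 ∈ vs
  order : vs.Pairwise fun u v => (v, u) ∉ A.loans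
  guards : ∀ v ∈ vs, Guards (r v) (H v) (A.color v) (A.load v)

lemma IsSafe.of_loans_le (hA : A.IsSafe G L r vs H) (hB : IsLColoring G L B.color)
    (hle : B.loans ≤ A.loans) {H' : V → List ℕ}
    (hguards : ∀ v ∈ vs, Guards (r v) (H' v) (B.color v) (B.load v)) : B.IsSafe G L r vs H' where
  isLColoring := hB
  adj t ht := hA.adj t (Multiset.mem_of_le hle ht)
  mem t ht := hA.mem t (Multiset.mem_of_le hle ht)
  order := hA.order.imp fun h ht => h (Multiset.mem_of_le hle ht)
  guards := hguards

variable [DecidableEq V]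

/-- The number of recolorings of `v` that the ledger `A` provides for, when every color of `v` is
chosen to avoid about `r v` upcoming hits. -/
def budget (r : V → ℕ) (A : Ledger V) (v : V) : ℕ :=
  cost (r v) ((A.loans.map Prod.snd).count v) ((A.loans.map Prod.fst).count v) (A.load v)

/-- The ledger `B` arises from `A` by recolorings of vertices of `vs`, each of which lowers the
budget of the recolored vertex by at least `1`. -/
def Pays (G : SimpleGraph V) (L : V → Finset ℕ) (r : V → ℕ) (vs : List V) (A B : Ledger V) :
    Prop :=
  B.loans ≤ A.loans ∧ ∃ l, RecolorPath G L A.color B.color l ∧ (∀ u ∉ vs, moveCount l u = 0) ∧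
    ∀ u, moveCount l u + B.budget r u ≤ A.budget r u

lemma Pays.refl (hA : IsLColoring G L A.color) : Pays G L r vs A A :=
  ⟨le_rfl, [], .nil hA, fun _ _ => rfl, fun _ => by simp⟩

lemma Pays.trans (hAB : Pays G L r vs A B) (hBC : Pays G L r vs B C) : Pays G L r vs A C := by
  obtain ⟨hle, l, hpath, hzero, hbudget⟩ := hAB
  obtain ⟨hle', l', hpath', hzero', hbudget'⟩ := hBC
  refine ⟨hle'.trans hle, l ++ l', hpath.append hpath', fun u hu => ?_, fun u => ?_⟩
  · simp [hzero u hu, hzero' u hu]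
  · rw [moveCount_append]
    have := hbudget u
    have := hbudget' u
    omega

variable [G.LocallyFinite]

lemma IsSafe.exists_pays_color_ne_of_forall_notMem (hA : A.IsSafe G L r vs H) (hv : v ∈ vs)
    (hr : 0 < r v) (hslack : G.degree v + 1 + r v ≤ (L v).card)
    (hload : (H v).length + 1 + r v ≤ A.load v) (hloans : ∀ u, (v, u) ∉ A.loans) :
    ∃ B, B.IsSafe G L r vs H ∧ Pays G L r vs A B ∧ B.color v ≠ A.color v ∧
      ∀ u ≠ v, B.color u = A.color u := by
  obtain ⟨x, hx, hxv, hadj, hguard⟩ := exists_color_guards hslack hr A.color (H v)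
  let B : Ledger V :=
    ⟨Function.update A.color v x, Function.update A.load v ((H v).length + 1), A.loans⟩
  have hcount : (A.loans.map Prod.fst).count v = 0 := by
    simpa [Multiset.count_eq_zero] using hloans
  have hpath : RecolorPath G L A.color B.color [(v, x)] := .single hA.isLColoring hx hxv hadj
  refine ⟨B, hA.of_loans_le hpath.right le_rfl fun u hu => ?_,
    ⟨le_rfl, _, hpath, fun u hu => ?_, fun u => ?_⟩, by simpa [B] using hxv,
    fun u hu => Function.update_of_ne hu _ _⟩
  · obtain rfl | huv := eq_or_ne u v
    · simpa [B] using hguard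
    · simpa [B, huv] using hA.guards u hu
  · simp [ne_of_mem_of_not_mem hv hu |>.symm]
  · obtain rfl | huv := eq_or_ne u v
    · simpa [budget, B, hcount] using one_add_cost_le_cost_of_weak hr hload
    · simp [budget, B, huv]

lemma IsSafe.exists_pays_color_ne_of_mem (hA : A.IsSafe G L r vs H) (hv : v ∈ vs) {u : V}
    (hr : 0 < r u) (hslack : ∀ w ∈ vs, G.degree w + 1 + r w ≤ (L w).card)
    (hload : (H v).length + 1 + r v ≤ A.load v) (hloan : (v, u) ∈ A.loans) :
    ∃ B, B.IsSafe G L r vs H ∧ Pays G L r vs A B ∧ B.color v ≠ A.color v ∧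
      ∀ w ≠ v, w ≠ u → B.color w = A.color w := by
  have huv : u ≠ v := (hA.adj _ hloan).ne'
  have hu : u ∈ vs := hA.mem _ hloan
  obtain ⟨x, hx, hxv, hadj, hguard⟩ :=
    exists_color_guards_of_ignore (hslack v hv) (hA.adj _ hloan) A.color (H v)
  obtain ⟨φ, q, l, hpath, hux, hzero, hguard', hcost⟩ :=
    exists_recolorPath_ne (hslack u hu) hr hA.isLColoring (hA.guards u hu) x
  have hφ : ∀ w ≠ u, φ w = A.color w := fun w hw => hpath.eq_of_moveCount_eq_zero (hzero w hw)
  obtain ⟨loans, hloans⟩ := Multiset.exists_cons_of_mem hloan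
  have hle : loans ≤ A.loans := hloans ▸ Multiset.le_cons_self _ _
  let B : Ledger V :=
    ⟨Function.update φ v x, Function.update (Function.update A.load u q) v (H v).length, loans⟩
  have hpath' : RecolorPath G L φ B.color [(v, x)] :=
    .single hpath.right hx (by rwa [hφ v huv.symm]) fun w hw => by
      obtain rfl | hwu := eq_or_ne w u
      · exact hux
      · rw [hφ w hwu]
        exact hadj w hw hwu
  refine ⟨B, hA.of_loans_le hpath'.right hle fun w hw => ?_,
    ⟨hle, _, hpath.append hpath', fun w hw => ?_, fun w => ?_⟩, by simpa [B] using hxv,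
    fun w hwv hwu => (Function.update_of_ne hwv _ _).trans (hφ w hwu)⟩
  · obtain rfl | hwv := eq_or_ne w v
    · simpa [B] using hguard
    · obtain rfl | hwu := eq_or_ne w u
      · simpa [B, hwv] using hguard'
      · simpa [B, hwv, hwu, hφ w hwu] using hA.guards w hw
  · simp [hzero w (ne_of_mem_of_not_mem hu hw).symm, (ne_of_mem_of_not_mem hv hw).symm]
  · obtain rfl | hwv := eq_or_ne w v
    · simpa [budget, B, hloans, hzero w huv.symm, huv.symm] using
        one_add_cost_le_cost_of_strong (by omega : (H w).length + (r w + 1) ≤ A.load w)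
    · obtain rfl | hwu := eq_or_ne w u
      · simpa [budget, B, hloans, hwv] using hcost _ _
      · simp [budget, B, hloans, hwv, hwu, hzero w hwu]

lemma IsSafe.exists_pays_ne_of_eq_cons (hA : A.IsSafe G L r vs H) (hr : ∀ u ∈ vs, 0 < r u)
    (hslack : ∀ u ∈ vs, G.degree u + 1 + r u ≤ (L u).card) (hv : v ∈ vs) {y : ℕ} {t : List ℕ}
    (hH : H v = y :: t) :
    ∃ B, B.IsSafe G L r vs (Function.update H v t) ∧ Pays G L r vs A B ∧ B.color v ≠ y ∧
      ∀ u ≠ v, (v, u) ∉ A.loans → B.color u = A.color u := by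
  have hguard : Guards (r v) (y :: t) (A.color v) (A.load v) := hH ▸ hA.guards v hv
  have hA' : A.IsSafe G L r vs (Function.update H v t) :=
    hA.of_loans_le hA.isLColoring le_rfl fun u hu => by
      obtain rfl | huv := eq_or_ne u v
      · simpa using hguard.of_cons
      · simpa [huv] using hA.guards u hu
  by_cases hy : A.color v = y
  · have hload : (Function.update H v t v).length + 1 + r v ≤ A.load v := by
      rw [Function.update_self]
      exact (hy ▸ hguard).length_add_le
    by_cases hloans : ∀ u, (v, u) ∉ A.loans
    · obtain ⟨B, hB, hpays, hne, heq⟩ :=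
        hA'.exists_pays_color_ne_of_forall_notMem hv (hr v hv) (hslack v hv) hload hloans
      exact ⟨B, hB, hpays, hy ▸ hne, fun u hu _ => heq u hu⟩
    · obtain ⟨u, hu⟩ := not_forall_not.1 hloans
      obtain ⟨B, hB, hpays, hne, heq⟩ :=
        hA'.exists_pays_color_ne_of_mem hv (hr u (hA.mem _ hu)) hslack hload hu
      exact ⟨B, hB, hpays, hy ▸ hne, fun w hw hwu => heq w hw fun h => hwu (h ▸ hu)⟩
  · exact ⟨A, hA', .refl hA.isLColoring, hy, fun _ _ _ => rfl⟩

lemma IsSafe.exists_pays_forall_ne (hA : A.IsSafe G L r vs H) (hr : ∀ u ∈ vs, 0 < r u)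
    (hslack : ∀ u ∈ vs, G.degree u + 1 + r u ≤ (L u).card) (hnodup : vs.Nodup) {us : List V}
    (hus : us.Sublist vs) {y : ℕ} {H' : V → List ℕ} (hmem : ∀ u ∈ us, H u = y :: H' u)
    (hnotMem : ∀ u ∈ vs, u ∉ us → H u = H' u) :
    ∃ B, B.IsSafe G L r vs H' ∧ Pays G L r vs A B ∧ (∀ u ∈ us, B.color u ≠ y) ∧
      ∀ u ∉ us, (∀ v ∈ us, (v, u) ∉ A.loans) → B.color u = A.color u := by
  induction us generalizing A H with
  | nil =>
    have hA' : A.IsSafe G L r vs H' :=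
      hA.of_loans_le hA.isLColoring le_rfl fun u hu =>
        hnotMem u hu List.not_mem_nil ▸ hA.guards u hu
    exact ⟨A, hA', .refl hA.isLColoring, by simp, by simp⟩
  | cons v us ih =>
    obtain ⟨hvs, -⟩ := List.nodup_cons.1 (hnodup.sublist hus)
    have horder := (List.pairwise_cons.1 (hA.order.sublist hus)).1
    obtain ⟨B, hB, hAB, hBv, hBeq⟩ :=
      hA.exists_pays_ne_of_eq_cons hr hslack (hus.subset List.mem_cons_self)
        (hmem v List.mem_cons_self)
    have hmem' : ∀ u ∈ us, Function.update H v (H' v) u = y :: H' u := fun u hu => by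
      rw [Function.update_of_ne (ne_of_mem_of_not_mem hu hvs)]
      exact hmem u (List.mem_cons_of_mem v hu)
    have hnotMem' : ∀ u ∈ vs, u ∉ us → Function.update H v (H' v) u = H' u := fun u hu hus => by
      obtain rfl | huv := eq_or_ne u v
      · simp
      · rw [Function.update_of_ne huv]
        exact hnotMem u hu (by simp [huv, hus])
    obtain ⟨C, hC, hBC, hCne, hCeq⟩ :=
      ih hB ((List.sublist_cons_self v us).trans hus) hmem' hnotMem'
    have hloans : ∀ t ∉ A.loans, t ∉ B.loans := fun t ht h => ht (Multiset.mem_of_le hAB.1 h)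
    refine ⟨C, hC, hAB.trans hBC, List.forall_mem_cons.2 ⟨?_, hCne⟩, fun u hu hloan => ?_⟩
    · rwa [hCeq v hvs fun w hw => hloans _ (horder w hw)]
    · obtain ⟨huv, hu⟩ := not_or.1 (List.mem_cons.not.1 hu)
      obtain ⟨hvloan, hloan⟩ := List.forall_mem_cons.1 hloan
      rw [hCeq u hu fun w hw => hloans _ (hloan w hw), hBeq u huv hvloan]

end Ledger

end Ledgers

section Hits

variable {V : Type} {G : SimpleGraph V} [DecidableRel G.Adj] {T : Set V}

/-- The successive colors that the moves `l` of vertices of `T` give to neighbors of `v`. -/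
def hits (G : SimpleGraph V) [DecidableRel G.Adj] (v : V) (l : List (↥T × ℕ)) : List ℕ :=
  (l.filter fun m => G.Adj v m.1).map Prod.snd

lemma hits_cons_of_adj {v : V} {w : ↥T} (h : G.Adj v w) (x : ℕ) (l : List (↥T × ℕ)) :
    hits G v ((w, x) :: l) = x :: hits G v l := by
  simp [hits, h]

lemma hits_cons_of_not_adj {v : V} {w : ↥T} (h : ¬G.Adj v w) (x : ℕ) (l : List (↥T × ℕ)) :
    hits G v ((w, x) :: l) = hits G v l := by
  simp [hits, h]

lemma length_hits_le [DecidableEq V] {v : V} [Fintype (G.neighborSet v)] {l : List (↥T × ℕ)}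
    {k d : ℕ} (hl : ∀ u, moveCount l u ≤ k) {I : Finset V} (hI : I ⊆ G.neighborFinset v)
    (hIT : ∀ u ∈ I, u ∉ T) (hdeg : G.degree v ≤ d + I.card) : (hits G v l).length ≤ d * k := by
  set l' := l.filter fun m => G.Adj v m.1 with hl'
  have hcard : (l'.map Prod.fst).toFinset.card ≤ (G.neighborFinset v \ I).card := by
    refine Finset.card_le_card_of_injOn Subtype.val (fun u hu => ?_) Subtype.val_injective.injOn
    obtain ⟨m, hm, rfl⟩ := List.mem_map.1 (List.mem_toFinset.1 hu)
    have hadj : G.Adj v m.1 := by simpa using List.of_mem_filter hm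
    simpa using ⟨hadj, fun h => hIT _ h m.1.2⟩
  have hd : (G.neighborFinset v \ I).card ≤ d := by
    rw [Finset.card_sdiff_of_subset hI, G.card_neighborFinset_eq_degree]
    omega
  calc (hits G v l).length = (l'.map Prod.fst).length := by simp [hits, hl']
    _ = ∑ u ∈ (l'.map Prod.fst).toFinset, moveCount l' u :=
        (List.sum_toFinset_count_eq_length _).symm
    _ ≤ (l'.map Prod.fst).toFinset.card * k := Finset.sum_le_card_nsmul _ _ _ fun u _ =>
        (moveCount_le_of_sublist List.filter_sublist u).trans (hl u)
    _ ≤ d * k := Nat.mul_le_mul_right k (hcard.trans hd)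

end Hits

section Extension

variable {V : Type} [DecidableEq V] {G : SimpleGraph V} [DecidableRel G.Adj] [G.LocallyFinite]
  {L : V → Finset ℕ} {r : V → ℕ} {vs : List V} {T : Set V}

lemma Ledger.IsSafe.exists_pays_of_move {A : Ledger V} {w : ↥T} {x : ℕ} {l : List (↥T × ℕ)}
    (hA : A.IsSafe G L r vs fun v => hits G v ((w, x) :: l)) (hr : ∀ v ∈ vs, 0 < r v)
    (hslack : ∀ v ∈ vs, G.degree v + 1 + r v ≤ (L v).card) (hnodup : vs.Nodup)
    (hT : ∀ u, u ∈ T ↔ u ∉ vs) :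
    ∃ B : Ledger V, B.IsSafe G L r vs (fun v => hits G v l) ∧ Pays G L r vs A B ∧
      (∀ u ∈ vs, G.Adj w u → B.color u ≠ x) ∧ ∀ u : ↥T, B.color u = A.color u := by
  have hmem : ∀ {u}, u ∈ vs.filter (fun u => G.Adj w u) ↔ u ∈ vs ∧ G.Adj w u := by simp
  obtain ⟨B, hB, hpays, hne, heq⟩ := hA.exists_pays_forall_ne hr hslack hnodup
    List.filter_sublist (fun u hu => hits_cons_of_adj (hmem.1 hu).2.symm x l)
    (fun u hu hwu => hits_cons_of_not_adj (fun h => hwu (hmem.2 ⟨hu, h.symm⟩)) x l)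
  refine ⟨B, hB, hpays, fun u hu hwu => hne u (hmem.2 ⟨hu, hwu⟩), fun u => heq u ?_ ?_⟩
  · exact fun h => (hT u).1 u.2 (hmem.1 h).1
  · exact fun v _ h => (hT u).1 u.2 (hA.mem _ h)

lemma Ledger.IsSafe.exists_recolorPath_of_move {A : Ledger V} {φ : ↥T → ℕ} {w : ↥T} {x : ℕ}
    {l : List (↥T × ℕ)} (hA : A.IsSafe G L r vs fun v => hits G v ((w, x) :: l))
    (hφ : ∀ u : ↥T, A.color u = φ u) (hx : x ≠ φ w)
    (hmove : IsLColoring (G.induce T) (fun u => L u) (Function.update φ w x))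
    (hr : ∀ v ∈ vs, 0 < r v) (hslack : ∀ v ∈ vs, G.degree v + 1 + r v ≤ (L v).card)
    (hnodup : vs.Nodup) (hT : ∀ u, u ∈ T ↔ u ∉ vs) :
    ∃ (C : Ledger V) (l' : List (V × ℕ)), C.IsSafe G L r vs (fun v => hits G v l) ∧
      RecolorPath G L A.color C.color l' ∧ (∀ u : ↥T, C.color u = Function.update φ w x u) ∧
      (∀ u : ↥T, moveCount l' u = moveCount [(w, x)] u) ∧
      ∀ v ∈ vs, moveCount l' v + C.budget r v ≤ A.budget r v := by
  obtain ⟨B, hB, ⟨-, l', hpath, hzero, hbudget⟩, hne, heq⟩ :=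
    hA.exists_pays_of_move hr hslack hnodup hT
  have hw : ∀ v ∈ vs, v ≠ w := fun v hv h => (hT w).1 w.2 (h ▸ hv)
  have hfree : ∀ u, G.Adj w u → B.color u ≠ x := fun u hwu => by
    by_cases hu : u ∈ vs
    · exact hne u hu hwu
    · have huT : u ∈ T := (hT u).2 hu
      have hproper := hmove.2 (show (G.induce T).Adj ⟨u, huT⟩ w from hwu.symm)
      rwa [Function.update_self, Function.update_of_ne (fun h => hwu.ne' (congrArg Subtype.val h)),
        ← hφ, ← heq] at hproper
  have hxL : x ∈ L w := by simpa using hmove.1 w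
  let C : Ledger V := ⟨Function.update B.color w x, B.load, B.loans⟩
  have hstep : RecolorPath G L B.color C.color [((w : V), x)] :=
    .single hpath.right hxL (by rwa [heq, hφ]) hfree
  have hC : C.IsSafe G L r vs fun v => hits G v l :=
    hB.of_loans_le (B := C) hstep.right le_rfl fun v hv => by
      simpa only [C, Function.update_of_ne (hw v hv)] using hB.guards v hv
  refine ⟨C, _, hC, hpath.append hstep, fun u => ?_, fun u => ?_, fun v hv => ?_⟩
  · obtain rfl | huw := eq_or_ne u w
    · simp [C]
    · simp [C, huw, Subtype.coe_injective.ne huw, heq, hφ]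
  · obtain rfl | huw := eq_or_ne u w
    · simp [hzero u ((hT u).1 u.2)]
    · simp [hzero u ((hT u).1 u.2), huw, Subtype.coe_injective.ne huw]
  · simpa [hw v hv, Ledger.budget, C] using hbudget v

theorem RecolorPath.exists_extension {β : V → ℕ} (hβ : IsLColoring G L β) {φ : ↥T → ℕ}
    {l : List (↥T × ℕ)}
    (hpath : RecolorPath (G.induce T) (fun u => L u) φ (fun u => β u) l) {A : Ledger V}
    (hA : A.IsSafe G L r vs fun v => hits G v l) (hφ : ∀ u : ↥T, A.color u = φ u)
    (hr : ∀ v ∈ vs, 0 < r v) (hslack : ∀ v ∈ vs, G.degree v + 1 + r v ≤ (L v).card)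
    (hnodup : vs.Nodup) (hT : ∀ u, u ∈ T ↔ u ∉ vs) :
    ∃ l', RecolorPath G L A.color β l' ∧ (∀ u : ↥T, moveCount l' u = moveCount l u) ∧
      ∀ v ∈ vs, moveCount l' v ≤ A.budget r v + (vs.idxOf v + 1) := by
  generalize hψ : (fun u : ↥T => β u) = ψ at hpath
  induction hpath generalizing A with
  | nil _ =>
    subst hψ
    obtain ⟨l', hpath', hzero, hidx⟩ := exists_recolorPath_of_eq_off hnodup
      (fun v hv => (Nat.lt_add_of_pos_right (hr v hv)).trans_le (hslack v hv)) hA.isLColoring hβ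
      fun u hu => hφ ⟨u, (hT u).2 hu⟩
    exact ⟨l', hpath', fun u => hzero u ((hT u).1 u.2), fun v hv =>
      (hidx v hv).trans (Nat.le_add_left _ _)⟩
  | @cons φ ψ w x l _ hx htail ih =>
    obtain ⟨C, l₁, hC, hpath₁, hφC, hcount₁, hbudget₁⟩ :=
      hA.exists_recolorPath_of_move hφ hx htail.left hr hslack hnodup hT
    obtain ⟨l₂, hpath₂, hcount₂, hbudget₂⟩ := ih hC hφC hψ
    refine ⟨_, hpath₁.append hpath₂, fun u => ?_, fun v hv => ?_⟩
    · rw [moveCount_append, hcount₁, hcount₂, ← moveCount_append, List.singleton_append]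
    · rw [moveCount_append]
      have := hbudget₁ v hv
      have := hbudget₂ v hv
      omega

end Extension

section Criterion

variable {V : Type} [DecidableEq V] {G : SimpleGraph V} [G.LocallyFinite] {L : V → Finset ℕ}

theorem exists_isRecolSeq_of_cost_le {α β : V → ℕ} (hα : IsLColoring G L α)
    (hβ : IsLColoring G L β) {vs : List V} (hnodup : vs.Nodup) {T : Set V}
    (hT : ∀ u, u ∈ T ↔ u ∉ vs) {r d : V → ℕ} (hr : ∀ v ∈ vs, 0 < r v)
    (hslack : ∀ v ∈ vs, G.degree v + 1 + r v ≤ (L v).card)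
    (hd : ∀ v ∈ vs, ∃ I : Finset V, (∀ u ∈ I, G.Adj v u ∧ u ∈ vs) ∧ G.degree v ≤ d v + I.card)
    {loans : Multiset (V × V)} (hloans : ∀ t ∈ loans, G.Adj t.1 t.2 ∧ t.2 ∈ vs)
    (horder : vs.Pairwise fun u v => (v, u) ∉ loans) {k : ℕ}
    (hcost : ∀ v ∈ vs, cost (r v) ((loans.map Prod.snd).count v) ((loans.map Prod.fst).count v)
      (d v * k + r v) + (vs.idxOf v + 1) ≤ k)
    {m : ℕ} {φ : Fin (m + 1) → ↥T → ℕ}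
    (hφ : IsRecolSeq (G.induce T) (fun u => L u) φ (fun u => α u) (fun u => β u))
    (hcount : ∀ u, recolorCount φ u ≤ k) :
    ∃ (M : ℕ) (ψ : Fin (M + 1) → V → ℕ),
      IsRecolSeq G L ψ α β ∧ ∀ u, recolorCount ψ u ≤ k := by
  classical
  obtain ⟨l, hl, hlcount⟩ := hφ.exists_recolorPath
  have hlk : ∀ u, moveCount l u ≤ k := fun u => (hlcount u).trans_le (hcount u)
  let A : Ledger V := ⟨α, fun v => (hits G v l).length + r v, loans⟩
  have hA : A.IsSafe G L r vs fun v => hits G v l :=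
    ⟨hα, fun t ht => (hloans t ht).1, fun t ht => (hloans t ht).2, horder,
      fun v _ => guards_length_add _ _ _⟩
  obtain ⟨l', hpath, houtside, hinside⟩ :=
    hl.exists_extension hβ hA (fun _ => rfl) hr hslack hnodup hT
  obtain ⟨M, ψ, hψ, hψcount⟩ := hpath.exists_isRecolSeq
  refine ⟨M, ψ, hψ, fun u => (hψcount u).trans_le ?_⟩
  by_cases hu : u ∈ vs
  · obtain ⟨I, hI, hdeg⟩ := hd u hu
    have hhits : (hits G u l).length ≤ d u * k :=
      length_hits_le hlk (fun w hw => by simpa using (hI w hw).1)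
        (fun w hw hwT => (hT w).1 hwT (hI w hw).2) hdeg
    exact (hinside u hu).trans ((Nat.add_le_add_right
      (cost_mono_right (Nat.add_le_add_right hhits _)) _).trans (hcost u hu))
  · exact (houtside ⟨u, (hT u).2 hu⟩).trans_le (hlk _)

end Criterion

section Configuration

variable {V : Type} {a b c d e : V}

/-- The loans used for the configuration. The numbers `5`, `9`, `30` and `49` are, in this order,
the smallest for which `configuration_cost_le` holds at `a`, `e`, `b` and `d` when `k = 416`; the
bound at `c`, which lends to both `b` and `d`, then holds precisely when `416 ≤ k`. -/
def configurationLoans (a b c d e : V) : Multiset (V × V) :=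
  .replicate 5 (a, b) + .replicate 9 (e, d) + .replicate 30 (b, c) + .replicate 49 (d, c)

lemma mem_configurationLoans {t : V × V} :
    t ∈ configurationLoans a b c d e ↔ t = (a, b) ∨ t = (e, d) ∨ t = (b, c) ∨ t = (d, c) := by
  simp only [configurationLoans, Multiset.mem_add, Multiset.mem_replicate]
  tauto

lemma pairwise_notMem_configurationLoans (hnodup : [a, b, c, d, e].Nodup) :
    [a, e, b, d, c].Pairwise fun u v => (v, u) ∉ configurationLoans a b c d e := by
  have hreverse := List.nodup_reverse.2 hnodup
  simp only [List.reverse_cons, List.reverse_nil, List.nil_append, List.cons_append,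
    List.nodup_cons, List.mem_cons, not_or] at hnodup hreverse
  simp [mem_configurationLoans, hnodup, hreverse]

lemma configuration_cost_le [DecidableEq V] (hnodup : [a, b, c, d, e].Nodup) {k : ℕ}
    (hk : 416 ≤ k) :
    ∀ v ∈ [a, e, b, d, c], cost (if v = b ∨ v = d then 3 else 4)
      (((configurationLoans a b c d e).map Prod.snd).count v)
      (((configurationLoans a b c d e).map Prod.fst).count v)
      ((if v = a ∨ v = e then 4 else 3) * k + if v = b ∨ v = d then 3 else 4) +
        ([a, e, b, d, c].idxOf v + 1) ≤ k := by
  have hreverse := List.nodup_reverse.2 hnodup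
  simp only [List.reverse_cons, List.reverse_nil, List.nil_append, List.cons_append,
    List.nodup_cons, List.mem_cons, not_or] at hnodup hreverse
  simp only [configurationLoans, Multiset.map_add, Multiset.map_replicate, Multiset.count_add,
    Multiset.count_replicate, cost, List.forall_mem_cons, List.not_mem_nil, false_imp_iff,
    implies_true, and_true, List.idxOf_cons, beq_eq_decide, hnodup, hreverse, decide_true,
    decide_false, cond_true, cond_false, if_true, if_false, or_self, or_true, true_or]
  omega

end Configuration

theorem stmt_9_general {V : Type} (G : SimpleGraph V) [G.LocallyFinite] (k : ℕ) (hk : 416 ≤ k)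
    (L : V → Finset ℕ) (α β : V → ℕ) (hα : IsLColoring G L α) (hβ : IsLColoring G L β)
    (a b c d e : V) (hnodup : ([a, b, c, d, e] : List V).Nodup)
    (hab : G.Adj a b) (hbc : G.Adj b c) (hcd : G.Adj c d) (hde : G.Adj d e) (hbd : G.Adj b d)
    (ha : G.degree a ≤ 5) (hb : G.degree b ≤ 6) (hc : G.degree c ≤ 5) (hd : G.degree d ≤ 6)
    (he : G.degree e ≤ 5) (S : Set V) (hS : S = {a, b, c, d, e})
    (hL : ∀ u ∈ S, 10 ≤ (L u).card)
    (hrec : ∃ (m : ℕ) (φ : Fin (m + 1) → ↥(Sᶜ) → ℕ),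
      IsRecolSeq (G.induce Sᶜ) (fun u => L u.1) φ (fun u => α u.1) (fun u => β u.1) ∧
      ∀ u : ↥(Sᶜ), recolorCount φ u ≤ k) :
    ∃ (M : ℕ) (ψ : Fin (M + 1) → V → ℕ),
      IsRecolSeq G L ψ α β ∧ ∀ u : V, recolorCount ψ u ≤ k := by
  classical
  obtain ⟨m, φ, hφ, hcount⟩ := hrec
  have hS' : ∀ u, u ∈ S ↔ u ∈ [a, e, b, d, c] := fun u => by
    simp only [hS, Set.mem_insert_iff, Set.mem_singleton_iff, List.mem_cons, List.not_mem_nil]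
    tauto
  have hd' : ∀ v ∈ [a, e, b, d, c], ∃ I : Finset V,
      (∀ u ∈ I, G.Adj v u ∧ u ∈ [a, e, b, d, c]) ∧
        G.degree v ≤ (if v = a ∨ v = e then 4 else 3) + I.card := by
    simp only [List.forall_mem_cons, List.not_mem_nil, false_imp_iff, implies_true, and_true]
    refine ⟨⟨{b}, ?_⟩, ⟨{d}, ?_⟩, ⟨{a, c, d}, ?_⟩, ⟨{b, c, e}, ?_⟩, ⟨{b, d}, ?_⟩⟩
    all_goals grind [SimpleGraph.adj_comm]
  refine exists_isRecolSeq_of_cost_le hα hβ (vs := [a, e, b, d, c]) (by grind)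
    (fun u => (hS' u).not) (r := fun v => if v = b ∨ v = d then 3 else 4)
    (fun v _ => by split_ifs <;> norm_num) (fun v hv => ?_) hd'
    (fun t ht => ?_) (pairwise_notMem_configurationLoans hnodup)
    (configuration_cost_le hnodup hk) hφ hcount
  · have := hL v ((hS' v).2 hv)
    grind
  · obtain rfl | rfl | rfl | rfl := mem_configurationLoans.1 ht
    · simp [hab]
    · simp [hde.symm]
    · simp [hbc]
    · simp [hcd.symm]

/-- configuration RC(h): if `G` contains this configuration and `G − S` has a
`k`-good recoloring sequence between the restrictions of `α` and `β` (`k ≥ 416`),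
then `G` has a `k`-good recoloring sequence from `α` to `β`. -/
theorem stmt_9 {V : Type} [Fintype V] [DecidableEq V]
    (G : SimpleGraph V) [DecidableRel G.Adj]
    (k : ℕ) (hk : 416 ≤ k)
    (L : V → Finset ℕ) (hL : ∀ u, (L u).card = 10)
    (α β : V → ℕ) (hα : IsLColoring G L α) (hβ : IsLColoring G L β)
    (a b c d e : V) (hnodup : ([a, b, c, d, e] : List V).Nodup)
    (he1: G.Adj a b)
    (he2: G.Adj b c)
    (he3: G.Adj c d)
    (he4: G.Adj d e)
    (he5: G.Adj b d)
    (hda : G.degree a = 5)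
    (hdb : G.degree b = 6)
    (hdc : G.degree c = 5)
    (hdd : G.degree d = 6)
    (hde : G.degree e = 5)
    (S : Set V) (hS : S = {a, b, c, d, e})
    (hrec : ∃ (m : ℕ) (φ : Fin (m + 1) → ↥(Sᶜ) → ℕ),
      IsRecolSeq (G.induce Sᶜ) (fun u => L u.1) φ (fun u => α u.1) (fun u => β u.1) ∧
      ∀ u : ↥(Sᶜ), recolorCount φ u ≤ k) :
    ∃ (M : ℕ) (ψ : Fin (M + 1) → V → ℕ),
      IsRecolSeq G L ψ α β ∧ ∀ u : V, recolorCount ψ u ≤ k := by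
  exact stmt_9_general G k hk L α β hα hβ a b c d e hnodup he1 he2 he3 he4 he5 hda.le hdb.le hdc.le
    hdd.le hde.le S hS (fun u _ => (hL u).ge) hrec
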